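/- Let L be an ideal lattice such that the space Spec* L is noetherian. Then for every semi-prime a ∈ L there exists a unique set Ω of semi-prime elements of L such that: (1) supp(a) is the union of the supports supp(b) for b ∈ Ω, and these supports are pairwise disjoint and non-empty; and (2) each b ∈ Ω is indecomposable, in the sense that supp(b) cannot be written as a disjoint union of two non-empty subsets of Spec* L each of which is a union of closed subsets of Spec* L. -/

import Mathlib

open CompleteLattice TopologicalSpace

/-- An ideal lattice: a complete, compactly generated lattice with an associative
multiplication distributing over finite suprema, for which `⊤` is a compact
two-sided identity and products of compact elements are compact. -/
structure IsIdealLattice (α : Type*) [CompleteLattice α] [Mul α] : Prop where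
  mul_assoc : ∀ a b c : α, a * b * c = a * (b * c)
  compactlyGenerated : ∀ a : α, a = sSup {b : α | b ≤ a ∧ IsCompactElement b}
  mul_sup : ∀ a b c : α, a * (b ⊔ c) = a * b ⊔ a * c
  sup_mul : ∀ a b c : α, (a ⊔ b) * c = a * c ⊔ b * c
  top_compact : IsCompactElement (⊤ : α)
  top_mul : ∀ a : α, ⊤ * a = a
  mul_top : ∀ a : α, a * ⊤ = a
  compact_mul : ∀ a b : α, IsCompactElement a → IsCompactElement b → IsCompactElement (a * b)

/-- A prime element of an ideal lattice: `p ≠ ⊤` and `a * b ≤ p` implies `a ≤ p` or `b ≤ p`. -/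
def IsPrimeElt {α : Type*} [CompleteLattice α] [Mul α] (p : α) : Prop :=
  p ≠ ⊤ ∧ ∀ a b : α, a * b ≤ p → a ≤ p ∨ b ≤ p

/-- A semi-prime element of an ideal lattice: `b * b ≤ a` implies `b ≤ a`. -/
def IsSemiprimeElt {α : Type*} [CompleteLattice α] [Mul α] (a : α) : Prop :=
  ∀ b : α, b * b ≤ a → b ≤ a

/-- The set of prime elements of an ideal lattice, to be endowed with the `Spec*` topology. -/
def SpecStar (α : Type*) [CompleteLattice α] [Mul α] : Type _ := {p : α // IsPrimeElt p}

/-- The support `supp(a) = {p ∈ Spec* L : a ≰ p}`. -/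
def suppSet {α : Type*} [CompleteLattice α] [Mul α] (a : α) : Set (SpecStar α) :=
  {p | ¬ a ≤ p.1}

/-- The `Spec*` topology: the sets `supp(a)` for compact `a` form a basis of closed sets. -/
instance {α : Type*} [CompleteLattice α] [Mul α] : TopologicalSpace (SpecStar α) :=
  TopologicalSpace.generateFrom
    {U : Set (SpecStar α) | ∃ a : α, IsCompactElement a ∧ U = (suppSet a)ᶜ}

/-- A subset of `Spec* L` which is a union of closed subsets. -/
def IsUnionOfClosed {α : Type*} [CompleteLattice α] [Mul α]
    (Y : Set (SpecStar α)) : Prop :=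
  ∃ C : Set (Set (SpecStar α)), (∀ c ∈ C, IsClosed c) ∧ Y = ⋃₀ C

/-!
The primes above a semi-prime element have it as their infimum (Krull's argument with m-systems),
so semi-prime elements are determined by their supports. The supports contain `supp(c)` for compact
`c` and are closed under finite intersections and arbitrary unions; when `Spec* L` is noetherian
they are therefore exactly the unions of closed subsets of `Spec* L`. These unions are the open sets
of an Alexandrov topology, which is locally connected, and indecomposability is connectedness in
that topology. The decomposition of `supp(a)` is its partition into connected components.
-/

section ConnectedOpenPartition

variable {X : Type*} [TopologicalSpace X] {U V : Set X} {P : Set (Set X)}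

theorem isPreconnected_iff_not_exists_disjoint_union (hV : IsOpen V) :
    IsPreconnected V ↔ ¬ ∃ Y₁ Y₂ : Set X, IsOpen Y₁ ∧ IsOpen Y₂ ∧ Y₁.Nonempty ∧ Y₂.Nonempty ∧
      Disjoint Y₁ Y₂ ∧ V = Y₁ ∪ Y₂ := by
  constructor
  · rintro h ⟨Y₁, Y₂, hY₁, hY₂, hne₁, hne₂, hdisj, rfl⟩
    have hsub : Y₁ ∪ Y₂ ⊆ Y₁ := h.subset_left_of_subset_union hY₁ hY₂ hdisj subset_rfl
      (hne₁.mono (Set.subset_inter Set.subset_union_left subset_rfl))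
    exact hne₂.ne_empty (hdisj.symm.eq_bot_of_le (Set.subset_union_right.trans hsub))
  · rintro h u v hu hv hsub hVu hVv
    by_contra hempty
    refine h ⟨V ∩ u, V ∩ v, hV.inter hu, hV.inter hv, hVu, hVv, ?_, ?_⟩
    · rwa [Set.disjoint_iff_inter_eq_empty, ← Set.inter_inter_distrib_left,
        ← Set.not_nonempty_iff_eq_empty]
    · rw [← Set.inter_union_distrib_left, Set.inter_eq_left.mpr hsub]

/-- `P` is a partition of `U` into connected open sets. -/
structure IsConnectedOpenPartition (U : Set X) (P : Set (Set X)) : Prop where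
  isOpen : ∀ V ∈ P, IsOpen V
  isConnected : ∀ V ∈ P, IsConnected V
  pairwiseDisjoint : P.PairwiseDisjoint id
  sUnion_eq : ⋃₀ P = U

namespace IsConnectedOpenPartition

theorem connectedComponentIn_eq (h : IsConnectedOpenPartition U P) (hV : V ∈ P) {x : X}
    (hx : x ∈ V) : connectedComponentIn U x = V := by
  have hVU : V ⊆ U := h.sUnion_eq ▸ Set.subset_sUnion_of_mem hV
  have hcover : U ⊆ V ∪ ⋃₀ (P \ {V}) := by
    rw [← Set.sUnion_insert, Set.insert_sdiff_self_of_mem hV, h.sUnion_eq]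
  have hdisj : Disjoint V (⋃₀ (P \ {V})) :=
    Set.disjoint_sUnion_right.mpr fun W hW => h.pairwiseDisjoint hV hW.1 (Ne.symm hW.2)
  refine Set.Subset.antisymm ?_
    ((h.isConnected V hV).isPreconnected.subset_connectedComponentIn hx hVU)
  exact isPreconnected_connectedComponentIn.subset_left_of_subset_union (h.isOpen V hV)
    (isOpen_sUnion fun W hW => h.isOpen W hW.1) hdisj
    ((connectedComponentIn_subset U x).trans hcover) ⟨x, mem_connectedComponentIn (hVU hx), hx⟩

theorem eq_image_connectedComponentIn (h : IsConnectedOpenPartition U P) :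
    P = connectedComponentIn U '' U := by
  ext V
  constructor
  · intro hV
    obtain ⟨x, hx⟩ := (h.isConnected V hV).nonempty
    exact ⟨x, h.sUnion_eq ▸ ⟨V, hV, hx⟩, h.connectedComponentIn_eq hV hx⟩
  · rintro ⟨x, hx, rfl⟩
    obtain ⟨W, hW, hxW⟩ := h.sUnion_eq.symm ▸ hx
    rwa [h.connectedComponentIn_eq hW hxW]

end IsConnectedOpenPartition

theorem isConnectedOpenPartition_connectedComponentIn [LocallyConnectedSpace X] (hU : IsOpen U) :
    IsConnectedOpenPartition U (connectedComponentIn U '' U) where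
  isOpen := Set.forall_mem_image.mpr fun _ _ => hU.connectedComponentIn
  isConnected := Set.forall_mem_image.mpr fun _ hx => isConnected_connectedComponentIn_iff.mpr hx
  pairwiseDisjoint := by
    rintro _ ⟨x, -, rfl⟩ _ ⟨y, -, rfl⟩ hne
    refine Set.disjoint_left.mpr fun z hzx hzy => hne ?_
    rw [connectedComponentIn_eq hzx, connectedComponentIn_eq hzy]
  sUnion_eq := Set.Subset.antisymm
    (Set.sUnion_subset (Set.forall_mem_image.mpr fun x _ => connectedComponentIn_subset U x))
    fun x hx => ⟨_, Set.mem_image_of_mem _ hx, mem_connectedComponentIn hx⟩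

theorem isConnectedOpenPartition_iff [LocallyConnectedSpace X] (hU : IsOpen U) :
    IsConnectedOpenPartition U P ↔ P = connectedComponentIn U '' U :=
  ⟨fun h => h.eq_image_connectedComponentIn,
    fun h => h ▸ isConnectedOpenPartition_connectedComponentIn hU⟩

end ConnectedOpenPartition

theorem existsUnique_subset_image_eq {β γ : Type*} {f : β → γ} {s : Set β} {t P : Set γ}
    (hf : Set.BijOn f s t) (hP : P ⊆ t) : ∃! Ω : Set β, Ω ⊆ s ∧ f '' Ω = P := by
  obtain ⟨Ω, hΩ, hΩP⟩ := Set.subset_image_iff.mp (hf.image_eq ▸ hP)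
  exact ⟨Ω, ⟨hΩ, hΩP⟩, fun Ω' hΩ' =>
    (hf.injOn.image_eq_image_iff hΩ'.1 hΩ).mp (hΩ'.2.trans hΩP.symm)⟩

section Lattice

variable {α : Type*} [CompleteLattice α]

theorem exists_le_maximal_forall_not_le {M : Set α} (hM : ∀ c ∈ M, IsCompactElement c) {a : α}
    (ha : ∀ c ∈ M, ¬ c ≤ a) : ∃ p, a ≤ p ∧ Maximal (fun x => ∀ c ∈ M, ¬ c ≤ x) p := by
  refine zorn_le_nonempty₀ {x | ∀ c ∈ M, ¬ c ≤ x} (fun C hC hchain y hy => ?_) a ha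
  refine ⟨sSup C, fun c hc hle => ?_, fun z hz => le_sSup hz⟩
  obtain ⟨x, hx, hcx⟩ := (isCompactElement_iff_le_of_directed_sSup_le α c).mp (hM c hc) C
    ⟨y, hy⟩ hchain.directedOn hle
  exact hC hx c hc hcx

theorem isCompactElement_bot : IsCompactElement (⊥ : α) := by
  simpa only [Finset.sup_empty] using isCompactElement_finsetSup (f := id) (∅ : Finset α) (by simp)

theorem isCompactElement_sup {a b : α} (ha : IsCompactElement a) (hb : IsCompactElement b) :
    IsCompactElement (a ⊔ b) := by
  classical
  simpa [ha, hb] using isCompactElement_finsetSup (f := id) ({a, b} : Finset α)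

end Lattice

section Spectrum

open scoped Topology

variable {α : Type*} [CompleteLattice α] [Mul α]

/-- An m-system, the lattice analogue of a multiplicative set: any product of two of its elements
lies above a third. -/
def IsMSystem (M : Set α) : Prop :=
  ∀ x ∈ M, ∀ y ∈ M, ∃ z ∈ M, z ≤ x * y

namespace IsIdealLattice

theorem isCompactlyGenerated (hL : IsIdealLattice α) : IsCompactlyGenerated α :=
  ⟨fun a => ⟨_, fun _ hc => hc.2, (hL.compactlyGenerated a).symm⟩⟩

theorem mul_le_mul (hL : IsIdealLattice α) {a b c d : α} (hab : a ≤ b) (hcd : c ≤ d) :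
    a * c ≤ b * d :=
  calc a * c ≤ a * c ⊔ b * c := le_sup_left
    _ = b * c := by rw [← hL.sup_mul, sup_eq_right.mpr hab]
    _ ≤ b * c ⊔ b * d := le_sup_left
    _ = b * d := by rw [← hL.mul_sup, sup_eq_right.mpr hcd]

theorem mul_le_left (hL : IsIdealLattice α) (a b : α) : a * b ≤ a :=
  (hL.mul_le_mul le_rfl le_top).trans (hL.mul_top a).le

theorem mul_le_right (hL : IsIdealLattice α) (a b : α) : a * b ≤ b :=
  (hL.mul_le_mul le_top le_rfl).trans (hL.top_mul b).le

theorem sup_mul_sup_le (hL : IsIdealLattice α) (p x y : α) :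
    (p ⊔ x) * (p ⊔ y) ≤ p ⊔ x * y := by
  rw [hL.sup_mul, hL.mul_sup x]
  exact sup_le (le_sup_of_le_left (hL.mul_le_left _ _))
    (sup_le (le_sup_of_le_left (hL.mul_le_right _ _)) le_sup_right)

theorem isPrimeElt_of_maximal (hL : IsIdealLattice α) {M : Set α} (hM : IsMSystem M)
    (hne : M.Nonempty) {p : α} (hp : Maximal (fun x => ∀ c ∈ M, ¬ c ≤ x) p) : IsPrimeElt p := by
  have exists_le_sup : ∀ x, ¬ x ≤ p → ∃ c ∈ M, c ≤ p ⊔ x := by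
    intro x hx
    by_contra! havoid
    exact hx (le_sup_right.trans (hp.2 havoid le_sup_left))
  obtain ⟨c₀, hc₀⟩ := hne
  refine ⟨fun htop => hp.1 c₀ hc₀ (htop ▸ le_top), fun x y hxy => ?_⟩
  by_contra! hnot
  obtain ⟨c, hc, hcx⟩ := exists_le_sup x hnot.1
  obtain ⟨d, hd, hdy⟩ := exists_le_sup y hnot.2
  obtain ⟨z, hz, hzcd⟩ := hM c hc d hd
  refine hp.1 z hz ?_
  calc z ≤ c * d := hzcd
    _ ≤ (p ⊔ x) * (p ⊔ y) := hL.mul_le_mul hcx hdy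
    _ ≤ p ⊔ x * y := hL.sup_mul_sup_le p x y
    _ = p := sup_eq_left.mpr hxy

theorem isMSystem_range_iterate_sq (hL : IsIdealLattice α) (c : α) :
    IsMSystem (Set.range fun n => (fun x : α => x * x)^[n] c) := by
  have hanti : Antitone fun n => (fun x : α => x * x)^[n] c :=
    antitone_nat_of_succ_le fun n => by
      rw [Function.iterate_succ_apply']
      exact hL.mul_le_left _ _
  rintro _ ⟨n, rfl⟩ _ ⟨m, rfl⟩
  refine ⟨_, ⟨max n m + 1, rfl⟩, ?_⟩
  dsimp only
  rw [Function.iterate_succ_apply']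
  exact hL.mul_le_mul (hanti (le_max_left n m)) (hanti (le_max_right n m))

theorem exists_isPrimeElt_not_le (hL : IsIdealLattice α) {a c : α} (ha : IsSemiprimeElt a)
    (hc : IsCompactElement c) (hca : ¬ c ≤ a) : ∃ p, IsPrimeElt p ∧ a ≤ p ∧ ¬ c ≤ p := by
  have hcompact : ∀ n, IsCompactElement ((fun x : α => x * x)^[n] c) :=
    fun n => Function.Iterate.rec _ hc (fun _ h => hL.compact_mul _ _ h h) n
  have havoid : ∀ n, ¬ (fun x : α => x * x)^[n] c ≤ a :=
    fun n => Function.Iterate.rec (fun x => ¬ x ≤ a) hca (fun _ h hsq => h (ha _ hsq)) n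
  obtain ⟨p, hap, hp⟩ := exists_le_maximal_forall_not_le
    (Set.forall_mem_range.mpr hcompact) (Set.forall_mem_range.mpr havoid)
  exact ⟨p, hL.isPrimeElt_of_maximal (hL.isMSystem_range_iterate_sq c) (Set.range_nonempty _) hp,
    hap, hp.1 c ⟨0, rfl⟩⟩

theorem le_of_suppSet_subset (hL : IsIdealLattice α) {a b : α} (hb : IsSemiprimeElt b)
    (h : suppSet a ⊆ suppSet b) : a ≤ b := by
  have := hL.isCompactlyGenerated
  refine le_iff_compact_le_imp.mpr fun c hc hca => ?_
  by_contra hcb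
  obtain ⟨p, hp, hbp, hcp⟩ := hL.exists_isPrimeElt_not_le hb hc hcb
  exact h (a := ⟨p, hp⟩) (fun hap => hcp (hca.trans hap)) hbp

theorem injOn_suppSet (hL : IsIdealLattice α) :
    Set.InjOn suppSet {b : α | IsSemiprimeElt b} := fun _ ha _ hb h =>
  (hL.le_of_suppSet_subset hb h.subset).antisymm (hL.le_of_suppSet_subset ha h.superset)

end IsIdealLattice

theorem suppSet_sSup (A : Set α) : suppSet (sSup A) = ⋃ a ∈ A, suppSet a := by
  ext p
  simp [suppSet]

theorem suppSet_sup (a b : α) : suppSet (a ⊔ b) = suppSet a ∪ suppSet b := by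
  rw [← sSup_pair, suppSet_sSup, Set.biUnion_pair]

theorem suppSet_bot : suppSet (⊥ : α) = ∅ := by
  rw [← sSup_empty, suppSet_sSup, Set.biUnion_empty]

theorem suppSet_top : suppSet (⊤ : α) = Set.univ :=
  Set.eq_univ_of_forall fun p htop => p.2.1 (top_le_iff.mp htop)

theorem IsIdealLattice.suppSet_mul (hL : IsIdealLattice α) (a b : α) :
    suppSet (a * b) = suppSet a ∩ suppSet b := by
  ext p
  exact ⟨fun h => ⟨fun ha => h ((hL.mul_le_left a b).trans ha),
    fun hb => h ((hL.mul_le_right a b).trans hb)⟩, fun h hab => (p.2.2 a b hab).elim h.1 h.2⟩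

/-- The infimum of the primes above `a`, which is the semi-prime element with the same support. -/
noncomputable def primeRadical (a : α) : α :=
  sInf {p | IsPrimeElt p ∧ a ≤ p}

theorem isSemiprimeElt_primeRadical (a : α) : IsSemiprimeElt (primeRadical a) := fun b hb =>
  le_sInf fun _ hp => or_self_iff.mp (hp.1.2 b b (hb.trans (sInf_le hp)))

theorem suppSet_primeRadical (a : α) : suppSet (primeRadical a) = suppSet a := by
  ext p
  exact not_congr ⟨(le_sInf fun _ hq => hq.2).trans, fun hap => sInf_le ⟨p.2, hap⟩⟩

theorem isClosed_suppSet {c : α} (hc : IsCompactElement c) : IsClosed (suppSet c) :=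
  ⟨isOpen_generateFrom_of_mem ⟨c, hc, rfl⟩⟩

theorem isTopologicalBasis_compl_suppSet :
    IsTopologicalBasis (Set.range fun c : {c : α // IsCompactElement c} => (suppSet c.1)ᶜ) := by
  refine isTopologicalBasis_of_subbasis_of_finiteInter (congrArg generateFrom ?_) ⟨?_, ?_⟩
  · ext U
    simp [eq_comm]
  · exact ⟨⟨⊥, isCompactElement_bot⟩, by simp only [suppSet_bot, Set.compl_empty]⟩
  · rintro _ ⟨⟨c, hc⟩, rfl⟩ _ ⟨⟨d, hd⟩, rfl⟩
    exact ⟨⟨c ⊔ d, isCompactElement_sup hc hd⟩, by simp only [suppSet_sup, Set.compl_union]⟩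

namespace IsIdealLattice

theorem finiteInter_range_suppSet (hL : IsIdealLattice α) :
    FiniteInter (Set.range (suppSet (α := α))) where
  univ_mem := ⟨⊤, suppSet_top⟩
  inter_mem := by
    rintro _ ⟨a, rfl⟩ _ ⟨b, rfl⟩
    exact ⟨a * b, hL.suppSet_mul a b⟩

theorem mem_range_suppSet_of_isClosed [NoetherianSpace (SpecStar α)] (hL : IsIdealLattice α)
    {Y : Set (SpecStar α)} (hY : IsClosed Y) : Y ∈ Set.range (suppSet (α := α)) := by
  obtain ⟨s, hs, hYs⟩ := eq_finite_iUnion_of_isTopologicalBasis_of_isCompact_open _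
    isTopologicalBasis_compl_suppSet Yᶜ (NoetherianSpace.isCompact _) hY.isOpen_compl
  have hY_eq : Y = ⋂₀ ((fun c => suppSet c.1) '' s) := by
    rw [Set.sInter_image, ← compl_compl Y, hYs]
    simp only [Set.compl_iUnion, compl_compl]
  lift s to Finset {c : α // IsCompactElement c} using hs
  classical
  rw [hY_eq, ← Finset.coe_image]
  refine hL.finiteInter_range_suppSet.finiteInter_mem _ ?_
  rw [Finset.coe_image]
  exact Set.image_subset_iff.mpr fun c _ => Set.mem_range_self c.1

theorem isUnionOfClosed_suppSet (hL : IsIdealLattice α) (b : α) : IsUnionOfClosed (suppSet b) := by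
  refine ⟨suppSet '' {c | c ≤ b ∧ IsCompactElement c},
    Set.forall_mem_image.mpr fun c hc => isClosed_suppSet hc.2, ?_⟩
  rw [Set.sUnion_image, ← suppSet_sSup, ← hL.compactlyGenerated]

theorem mem_range_suppSet_of_isUnionOfClosed [NoetherianSpace (SpecStar α)]
    (hL : IsIdealLattice α) {Y : Set (SpecStar α)} (hY : IsUnionOfClosed Y) :
    Y ∈ Set.range (suppSet (α := α)) := by
  obtain ⟨C, hC, rfl⟩ := hY
  choose! f hf using fun Z hZ => hL.mem_range_suppSet_of_isClosed (hC Z hZ)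
  exact ⟨sSup (f '' C), by
    rw [suppSet_sSup, Set.biUnion_image, Set.sUnion_eq_biUnion, Set.iUnion₂_congr hf]⟩

theorem bijOn_suppSet [NoetherianSpace (SpecStar α)] (hL : IsIdealLattice α) :
    Set.BijOn suppSet {b : α | IsSemiprimeElt b} {Y | IsUnionOfClosed Y} := by
  refine ⟨fun b _ => hL.isUnionOfClosed_suppSet b, hL.injOn_suppSet, fun Y hY => ?_⟩
  obtain ⟨b, rfl⟩ := hL.mem_range_suppSet_of_isUnionOfClosed hY
  exact ⟨primeRadical b, isSemiprimeElt_primeRadical b, suppSet_primeRadical b⟩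

end IsIdealLattice

/-- The topology on `Spec* L` whose open sets are the unions of closed sets, presented as the
lower set topology of the specialization order. -/
@[reducible]
def unionOfClosedTopology (α : Type*) [CompleteLattice α] [Mul α] :
    TopologicalSpace (SpecStar α) :=
  @Topology.lowerSet (SpecStar α) (specializationPreorder (SpecStar α))

theorem isOpen_unionOfClosedTopology_iff {Y : Set (SpecStar α)} :
    IsOpen[unionOfClosedTopology α] Y ↔ IsUnionOfClosed Y :=
  stableUnderSpecialization_iff_exists_sUnion_eq.trans
    (exists_congr fun _ => and_congr_right fun _ => eq_comm)

theorem locallyConnectedSpace_unionOfClosedTopology :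
    @LocallyConnectedSpace (SpecStar α) (unionOfClosedTopology α) := by
  let := specializationPreorder (SpecStar α)
  let := unionOfClosedTopology α
  infer_instance

theorem isConnectedOpenPartition_image_suppSet_iff (hL : IsIdealLattice α) {a : α} {Ω : Set α}
    (hΩ : Ω ⊆ {b | IsSemiprimeElt b}) :
    @IsConnectedOpenPartition _ (unionOfClosedTopology α) (suppSet a) (suppSet '' Ω) ↔
      (∀ b ∈ Ω, (suppSet b).Nonempty) ∧
      (∀ b ∈ Ω, ∀ c ∈ Ω, b ≠ c → Disjoint (suppSet b) (suppSet c)) ∧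
      suppSet a = ⋃ b ∈ Ω, suppSet b ∧
      ∀ b ∈ Ω, ¬ ∃ Y₁ Y₂ : Set (SpecStar α),
        IsUnionOfClosed Y₁ ∧ IsUnionOfClosed Y₂ ∧
        Y₁.Nonempty ∧ Y₂.Nonempty ∧ Disjoint Y₁ Y₂ ∧
        suppSet b = Y₁ ∪ Y₂ := by
  let := unionOfClosedTopology α
  have isOpen_suppSet (b : α) : IsOpen (suppSet b) :=
    isOpen_unionOfClosedTopology_iff.mpr (hL.isUnionOfClosed_suppSet b)
  have disjoint_iff : (suppSet '' Ω).PairwiseDisjoint id ↔ Ω.PairwiseDisjoint suppSet :=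
    (hL.injOn_suppSet.mono hΩ).pairwiseDisjoint_image
  have indecomposable_iff (b : α) := isPreconnected_iff_not_exists_disjoint_union (isOpen_suppSet b)
  simp only [isOpen_unionOfClosedTopology_iff] at indecomposable_iff
  constructor
  · rintro ⟨-, hconn, hdisj, hunion⟩
    rw [Set.forall_mem_image] at hconn
    exact ⟨fun b hb => (hconn hb).nonempty,
      fun b hb c hc hbc => disjoint_iff.mp hdisj hb hc hbc,
      hunion.symm.trans (Set.sUnion_image _ _),
      fun b hb => (indecomposable_iff b).mp (hconn hb).isPreconnected⟩
  · rintro ⟨hne, hdisj, hunion, hindec⟩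
    exact {
      isOpen := Set.forall_mem_image.mpr fun b _ => isOpen_suppSet b
      isConnected := Set.forall_mem_image.mpr fun b hb =>
        ⟨hne b hb, (indecomposable_iff b).mpr (hindec b hb)⟩
      pairwiseDisjoint := disjoint_iff.mpr fun b hb c hc hbc => hdisj b hb c hc hbc
      sUnion_eq := (Set.sUnion_image _ _).trans hunion.symm }

end Spectrum

theorem unique_decomposition_of_semiprime_general {α : Type*} [CompleteLattice α] [Mul α]
    (hL : IsIdealLattice α)
    (hnoeth : TopologicalSpace.NoetherianSpace (SpecStar α))
    (a : α) :
    ∃! Ω : Set α,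
      (∀ b ∈ Ω, IsSemiprimeElt b) ∧
      (∀ b ∈ Ω, (suppSet b).Nonempty) ∧
      (∀ b ∈ Ω, ∀ c ∈ Ω, b ≠ c → Disjoint (suppSet b) (suppSet c)) ∧
      suppSet a = ⋃ b ∈ Ω, suppSet b ∧
      ∀ b ∈ Ω, ¬ ∃ Y₁ Y₂ : Set (SpecStar α),
        IsUnionOfClosed Y₁ ∧ IsUnionOfClosed Y₂ ∧
        Y₁.Nonempty ∧ Y₂.Nonempty ∧ Disjoint Y₁ Y₂ ∧
        suppSet b = Y₁ ∪ Y₂ := by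
  let := unionOfClosedTopology α
  have := locallyConnectedSpace_unionOfClosedTopology (α := α)
  have hopen : IsOpen (suppSet a) :=
    isOpen_unionOfClosedTopology_iff.mpr (hL.isUnionOfClosed_suppSet a)
  have hcomponents : connectedComponentIn (suppSet a) '' suppSet a ⊆ {Y | IsUnionOfClosed Y} :=
    Set.image_subset_iff.mpr fun _ _ =>
      isOpen_unionOfClosedTopology_iff.mp hopen.connectedComponentIn
  refine (existsUnique_congr fun Ω => and_congr_right fun hΩ => ?_).mp
    (existsUnique_subset_image_eq hL.bijOn_suppSet hcomponents)
  exact (isConnectedOpenPartition_iff hopen).symm.trans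
    (isConnectedOpenPartition_image_suppSet_iff hL hΩ)

/-- If `Spec* L` is noetherian, then every semi-prime `a ∈ L` admits a unique
decomposition: there is a unique set `Ω` of semi-prime elements with pairwise disjoint
non-empty supports whose union is `supp(a)`, each of which is indecomposable in the
sense that its support is not a disjoint union of two non-empty subsets which are
unions of closed subsets of `Spec* L`. -/
theorem unique_decomposition_of_semiprime {α : Type*} [CompleteLattice α] [Mul α]
    (hL : IsIdealLattice α)
    (hnoeth : TopologicalSpace.NoetherianSpace (SpecStar α))
    (a : α) (ha : IsSemiprimeElt a) :
    ∃! Ω : Set α,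
      (∀ b ∈ Ω, IsSemiprimeElt b) ∧
      (∀ b ∈ Ω, (suppSet b).Nonempty) ∧
      (∀ b ∈ Ω, ∀ c ∈ Ω, b ≠ c → Disjoint (suppSet b) (suppSet c)) ∧
      suppSet a = ⋃ b ∈ Ω, suppSet b ∧
      ∀ b ∈ Ω, ¬ ∃ Y₁ Y₂ : Set (SpecStar α),
        IsUnionOfClosed Y₁ ∧ IsUnionOfClosed Y₂ ∧
        Y₁.Nonempty ∧ Y₂.Nonempty ∧ Disjoint Y₁ Y₂ ∧
        suppSet b = Y₁ ∪ Y₂ :=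
  unique_decomposition_of_semiprime_general hL hnoeth a
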